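/- arXiv:2206.02773 — 4 statements merged into one kernel-verified Lean document; each statement's English description precedes it below -/
import Mathlib

section
/- Let ξ and η be real random variables on a probability space (Ω, ℱ, P), let a, b > 0, and let φ : [0,∞) → ℝ be a function such that E exp(λ ξ) ≤ exp(φ(λ a)) and E exp(λ η) ≤ exp(φ(λ b)) for every λ ≥ 0, where both expectations are finite. Then E exp(λ (ξ + η)) ≤ exp(φ(λ (a + b))) for every λ ≥ 0. -/
open MeasureTheory
open scoped ENNReal

/-- **Triangle inequality for the `B(φ)` norm.** If `E exp(λ ξ) ≤ exp(φ(λ a))` and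
`E exp(λ η) ≤ exp(φ(λ b))` for every `λ ≥ 0` (both expectations finite), then
`E exp(λ (ξ + η)) ≤ exp(φ(λ (a + b)))` for every `λ ≥ 0`. -/
theorem bphi_triangle_inequality
    {Ω : Type*} [MeasurableSpace Ω] (P : Measure Ω) [IsProbabilityMeasure P]
    (ξ η : Ω → ℝ) (hξ : Measurable ξ) (hη : Measurable η)
    (a b : ℝ) (ha : 0 < a) (hb : 0 < b) (φ : ℝ → ℝ)
    (hξm : ∀ l : ℝ, 0 ≤ l →
      ∫⁻ ω, ENNReal.ofReal (Real.exp (l * ξ ω)) ∂P ≤ ENNReal.ofReal (Real.exp (φ (l * a))))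
    (hηm : ∀ l : ℝ, 0 ≤ l →
      ∫⁻ ω, ENNReal.ofReal (Real.exp (l * η ω)) ∂P ≤ ENNReal.ofReal (Real.exp (φ (l * b))))
    (l : ℝ) (hl : 0 ≤ l) :
    ∫⁻ ω, ENNReal.ofReal (Real.exp (l * (ξ ω + η ω))) ∂P
      ≤ ENNReal.ofReal (Real.exp (φ (l * (a + b)))) := by
  have hab : 0 < a + b := by positivity
  have hp : 0 ≤ a / (a + b) := by positivity
  have hq : 0 ≤ b / (a + b) := by positivity
  have hpq : a / (a + b) + b / (a + b) = 1 := by field_simp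
  have h1 := hξm (l * (a + b) / a) (by positivity)
  have h2 := hηm (l * (a + b) / b) (by positivity)
  rw [div_mul_cancel₀ _ ha.ne'] at h1
  rw [div_mul_cancel₀ _ hb.ne'] at h2
  have key := ENNReal.lintegral_mul_norm_pow_le (μ := P)
    (f := fun ω => ENNReal.ofReal (Real.exp (l * (a + b) / a * ξ ω)))
    (g := fun ω => ENNReal.ofReal (Real.exp (l * (a + b) / b * η ω)))
    (by fun_prop) (by fun_prop) hp hq hpq
  calc _ = _ := by
        refine lintegral_congr fun ω => ?_
        rw [ENNReal.ofReal_rpow_of_pos (Real.exp_pos _),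
          ENNReal.ofReal_rpow_of_pos (Real.exp_pos _),
          ← ENNReal.ofReal_mul (by positivity), ← Real.exp_mul, ← Real.exp_mul, ← Real.exp_add]
        congr 2
        field_simp
    _ ≤ _ := key
    _ ≤ ENNReal.ofReal (Real.exp (φ (l * (a + b)))) ^ (a / (a + b))
        * ENNReal.ofReal (Real.exp (φ (l * (a + b)))) ^ (b / (a + b)) :=
        mul_le_mul' (ENNReal.rpow_le_rpow h1 hp) (ENNReal.rpow_le_rpow h2 hq)
    _ = _ := by
        rw [← ENNReal.rpow_add_of_nonneg _ _ hp hq, hpq, ENNReal.rpow_one]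
end

section
/- Let ξ and η be real random variables on a probability space (Ω, ℱ, P), let a, b > 0, and let φ : [0,∞) → ℝ be a function such that E exp(λ ξ) ≤ exp(φ(λ a)) and E exp(λ η) ≤ exp(φ(λ b)) for every λ ≥ 0, where both expectations are finite. Define ν[φ](x) = sup_{λ ≥ 0} (λ x − φ(λ)). Then for every real u, P(ξ > u and η > u) ≤ exp(− ν[φ](2u / (a + b))). -/
open MeasureTheory
open scoped ENNReal

/-- `exp(− ν[φ](x))` where `ν[φ](x) = sup_{λ ≥ 0} (λ x − φ(λ))` is the Young–Fenchel
transform of `φ`; equivalently the infimum of `exp(φ(λ) − λ x)` over `λ ≥ 0`. -/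
noncomputable def expNegNu (φ : ℝ → ℝ) (x : ℝ) : ℝ≥0∞ :=
  ⨅ l : {l : ℝ // 0 ≤ l}, ENNReal.ofReal (Real.exp (φ l.1 - l.1 * x))

/-- **Joint-tail estimate (4.2).** If `‖ξ‖B(φ) ≤ a` and `‖η‖B(φ) ≤ b`
(with finite exponential moments), then for every real `u`,
`P(ξ > u, η > u) ≤ exp(− ν[φ](2u/(a+b)))`. -/
theorem joint_tail_upper_estimate
    {Ω : Type*} [MeasurableSpace Ω] (P : Measure Ω) [IsProbabilityMeasure P]
    (ξ η : Ω → ℝ) (hξ : Measurable ξ) (hη : Measurable η)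
    (a b : ℝ) (ha : 0 < a) (hb : 0 < b) (φ : ℝ → ℝ)
    (hξm : ∀ l : ℝ, 0 ≤ l →
      ∫⁻ ω, ENNReal.ofReal (Real.exp (l * ξ ω)) ∂P ≤ ENNReal.ofReal (Real.exp (φ (l * a))))
    (hηm : ∀ l : ℝ, 0 ≤ l →
      ∫⁻ ω, ENNReal.ofReal (Real.exp (l * η ω)) ∂P ≤ ENNReal.ofReal (Real.exp (φ (l * b))))
    (u : ℝ) :
    P {ω | ξ ω > u ∧ η ω > u} ≤ expNegNu φ (2 * u / (a + b)) := by
  unfold expNegNu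
  refine le_iInf ?_
  rintro ⟨t, ht⟩
  simp only
  have hab : 0 < a + b := by positivity
  have hw : a / (a + b) + b / (a + b) = 1 := by field_simp
  have hw0 : 0 ≤ a / (a + b) := by positivity
  have hv0 : 0 ≤ b / (a + b) := by positivity
  have h1 := hξm (t / a) (by positivity)
  have h2 := hηm (t / b) (by positivity)
  rw [div_mul_cancel₀ _ ha.ne'] at h1
  rw [div_mul_cancel₀ _ hb.ne'] at h2
  have hA : MeasurableSet {ω | ξ ω > u ∧ η ω > u} :=
    (measurableSet_lt measurable_const hξ).inter (measurableSet_lt measurable_const hη)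
  have m1 : Measurable fun ω => ENNReal.ofReal (Real.exp (t / a * ξ ω)) := by fun_prop
  have m2 : Measurable fun ω => ENNReal.ofReal (Real.exp (t / b * η ω)) := by fun_prop
  set c := Real.exp (-(t * (2 * u / (a + b)))) with hc
  have hc0 : 0 ≤ c := (Real.exp_pos _).le
  calc P {ω | ξ ω > u ∧ η ω > u}
      = ∫⁻ ω, Set.indicator {ω | ξ ω > u ∧ η ω > u} 1 ω ∂P := (lintegral_indicator_one hA).symm
    _ ≤ ∫⁻ ω, ENNReal.ofReal c * (ENNReal.ofReal (a / (a + b)) *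
          ENNReal.ofReal (Real.exp (t / a * ξ ω)) + ENNReal.ofReal (b / (a + b)) *
          ENNReal.ofReal (Real.exp (t / b * η ω))) ∂P := by
        refine lintegral_mono fun ω => ?_
        refine Set.indicator_le' (s := {ω | ξ ω > u ∧ η ω > u}) (f := 1) (g := fun ω =>
          ENNReal.ofReal c * (ENNReal.ofReal (a / (a + b)) *
          ENNReal.ofReal (Real.exp (t / a * ξ ω)) + ENNReal.ofReal (b / (a + b)) *
          ENNReal.ofReal (Real.exp (t / b * η ω)))) ?_ (fun _ _ => zero_le) ω
        rintro x ⟨hx1, hx2⟩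
        simp only [Pi.one_apply]
        rw [← ENNReal.ofReal_mul hw0, ← ENNReal.ofReal_mul hv0,
          ← ENNReal.ofReal_add (by positivity) (by positivity), ← ENNReal.ofReal_mul hc0,
          ENNReal.one_le_ofReal]
        have hcv := convexOn_exp.2 (Set.mem_univ (t / a * ξ x)) (Set.mem_univ (t / b * η x))
          hw0 hv0 hw
        simp only [smul_eq_mul] at hcv
        have he : a / (a + b) * (t / a * ξ x) + b / (a + b) * (t / b * η x)
            = t * ((ξ x + η x) / (a + b)) := by field_simp
        rw [he] at hcv
        have hle : t * (2 * u / (a + b)) ≤ t * ((ξ x + η x) / (a + b)) := by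
          gcongr
          linarith
        calc (1 : ℝ) = c * Real.exp (t * (2 * u / (a + b))) := by
              rw [hc, ← Real.exp_add]; simp
          _ ≤ _ := mul_le_mul_of_nonneg_left ((Real.exp_le_exp.2 hle).trans hcv) hc0
    _ = ENNReal.ofReal c * (ENNReal.ofReal (a / (a + b)) *
          ∫⁻ ω, ENNReal.ofReal (Real.exp (t / a * ξ ω)) ∂P + ENNReal.ofReal (b / (a + b)) *
          ∫⁻ ω, ENNReal.ofReal (Real.exp (t / b * η ω)) ∂P) := by
        rw [lintegral_const_mul _ (by fun_prop),
          lintegral_add_left (m1.const_mul _), lintegral_const_mul _ m1,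
          lintegral_const_mul _ m2]
    _ ≤ ENNReal.ofReal c * (ENNReal.ofReal (a / (a + b)) * ENNReal.ofReal (Real.exp (φ t))
          + ENNReal.ofReal (b / (a + b)) * ENNReal.ofReal (Real.exp (φ t))) := by
        gcongr
    _ = ENNReal.ofReal (Real.exp (φ t - t * (2 * u / (a + b)))) := by
        rw [← add_mul, ← ENNReal.ofReal_add hw0 hv0, hw, ENNReal.ofReal_one, one_mul,
          ← ENNReal.ofReal_mul hc0, hc, ← Real.exp_add]
        congr 2
        ring
end

section
/- Let ξ_1, …, ξ_d (d ≥ 2) be real random variables on a probability space (Ω, ℱ, P), let φ : [0,∞) → ℝ, and let β_1, …, β_d > 0 be such that E exp(λ ξ_i) ≤ exp(φ(λ β_i)) for every λ ≥ 0 and every i, with all these expectations finite. Define ν[φ](x) = sup_{λ ≥ 0} (λ x − φ(λ)), and suppose there exist δ_1, …, δ_d with 0 < δ_i ≤ β_i such that P(ξ_i > u) ≥ exp(− ν[φ](u / δ_i)) for every u ≥ 1 and every i. Then for every u ≥ 1, P(max_{i ≤ d} ξ_i > u) ≥ Σ_{i=1}^d exp(− ν[φ](u / δ_i)) − Σ_{i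 ≠ j, 1 ≤ i,j ≤ d} exp(− ν[φ](2u / (β_i + β_j))), where the double sum runs over ordered pairs (i, j) with i ≠ j. -/
open MeasureTheory Finset
open scoped ENNReal

lemma bonf_aux {Ω ι : Type*} [MeasurableSpace Ω] [DecidableEq ι] (P : Measure Ω)
    (A : ι → Set Ω) (hA : ∀ i, MeasurableSet (A i)) (s : Finset ι) :
    ∑ i ∈ s, P (A i) ≤ P (⋃ i ∈ s, A i) + ∑ p ∈ s.offDiag, P (A p.1 ∩ A p.2) := by
  induction s using Finset.induction_on with
  | empty => simp
  | insert a s ha ih =>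
    have hU : MeasurableSet (⋃ i ∈ s, A i) := Finset.measurableSet_biUnion s (fun i _ => hA i)
    have h1 := measure_union_add_inter (μ := P) (A a) hU
    have h2 : P (A a ∩ ⋃ i ∈ s, A i) ≤ ∑ i ∈ s, P (A a ∩ A i) := by
      rw [Set.inter_iUnion₂]
      exact measure_biUnion_finset_le s _
    have h3 : ∑ p ∈ s.offDiag, P (A p.1 ∩ A p.2) + ∑ i ∈ s, P (A a ∩ A i)
        ≤ ∑ p ∈ (insert a s).offDiag, P (A p.1 ∩ A p.2) := by
      have e : ∑ i ∈ s, P (A a ∩ A i) = ∑ p ∈ {a} ×ˢ s, P (A p.1 ∩ A p.2) := by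
        rw [Finset.sum_product]; simp
      rw [e, ← Finset.sum_union]
      · apply Finset.sum_le_sum_of_subset
        rw [Finset.offDiag_insert ha]
        exact Finset.subset_union_left
      · rw [Finset.disjoint_left]
        rintro ⟨x, y⟩ hx hy
        simp only [Finset.mem_offDiag, Finset.mem_product, Finset.mem_singleton] at hx hy
        exact ha (hy.1 ▸ hx.1)
    rw [Finset.sum_insert ha, Finset.set_biUnion_insert]
    calc P (A a) + ∑ i ∈ s, P (A i)
        ≤ P (A a) + (P (⋃ i ∈ s, A i) + ∑ p ∈ s.offDiag, P (A p.1 ∩ A p.2)) := by gcongr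
      _ = P (A a ∪ ⋃ i ∈ s, A i) + P (A a ∩ ⋃ i ∈ s, A i)
            + ∑ p ∈ s.offDiag, P (A p.1 ∩ A p.2) := by rw [h1]; ring
      _ ≤ P (A a ∪ ⋃ i ∈ s, A i) + ∑ i ∈ s, P (A a ∩ A i)
            + ∑ p ∈ s.offDiag, P (A p.1 ∩ A p.2) := by gcongr
      _ = P (A a ∪ ⋃ i ∈ s, A i) + (∑ p ∈ s.offDiag, P (A p.1 ∩ A p.2)
            + ∑ i ∈ s, P (A a ∩ A i)) := by ring
      _ ≤ _ := by gcongr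

lemma tail_aux {Ω : Type*} [MeasurableSpace Ω] (P : Measure Ω)
    (X : Ω → ℝ) (hX : Measurable X) (φ : ℝ → ℝ) (b : ℝ) (hb : 0 < b)
    (hmgf : ∀ l : ℝ, 0 ≤ l → ∫⁻ ω, ENNReal.ofReal (Real.exp (l * X ω)) ∂P
        ≤ ENNReal.ofReal (Real.exp (φ (l * b)))) (u x : ℝ) (hx : x ≤ u / b) :
    P {ω | X ω > u} ≤ expNegNu φ x := by
  refine le_iInf ?_
  rintro ⟨l, hl⟩
  have hm := hmgf (l / b) (by positivity)
  rw [div_mul_cancel₀ _ hb.ne'] at hm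
  have hc := mul_meas_ge_le_lintegral₀ (μ := P)
    (f := fun ω => ENNReal.ofReal (Real.exp (l / b * X ω))) (by fun_prop)
    (ENNReal.ofReal (Real.exp (l / b * u)))
  have hs : P {ω | X ω > u} ≤ P {ω | ENNReal.ofReal (Real.exp (l / b * u))
      ≤ ENNReal.ofReal (Real.exp (l / b * X ω))} := by
    apply measure_mono
    intro ω hω
    simp only [Set.mem_setOf_eq] at hω ⊢
    gcongr
  have h1 : ENNReal.ofReal (Real.exp (l / b * u)) * P {ω | X ω > u}
      ≤ ENNReal.ofReal (Real.exp (φ l)) := (mul_le_mul_right hs _).trans (hc.trans hm)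
  have h2 : P {ω | X ω > u} = ENNReal.ofReal (Real.exp (-(l / b * u))) *
      (ENNReal.ofReal (Real.exp (l / b * u)) * P {ω | X ω > u}) := by
    rw [← mul_assoc, ← ENNReal.ofReal_mul (Real.exp_pos _).le, ← Real.exp_add]
    simp
  rw [h2]
  refine (mul_le_mul_right h1 _).trans ?_
  rw [← ENNReal.ofReal_mul (Real.exp_pos _).le, ← Real.exp_add]
  apply ENNReal.ofReal_le_ofReal
  apply Real.exp_le_exp.mpr
  have := mul_le_mul_of_nonneg_left hx hl
  have e : l / b * u = l * (u / b) := by ring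
  simp only [e]
  linarith

/-- **Proposition 4.1: lower maximum tail estimate.** If `‖ξ i‖B(φ) ≤ β i` and
`P(ξ i > u) ≥ exp(−ν[φ](u/δ i))` with `0 < δ i ≤ β i`, then for `u ≥ 1`,
`P(max_i ξ i > u) ≥ ∑ i exp(−ν[φ](u/δ i)) − ∑∑_{i ≠ j} exp(−ν[φ](2u/(β i + β j)))`,
the double sum running over ordered pairs `(i,j)` with `i ≠ j`. -/
theorem maximum_tail_lower_estimate
    {Ω : Type*} [MeasurableSpace Ω] (P : Measure Ω) [IsProbabilityMeasure P]
    {d : ℕ} (hd : 2 ≤ d)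
    (ξ : Fin d → Ω → ℝ) (hmeas : ∀ i, Measurable (ξ i))
    (φ : ℝ → ℝ) (βv : Fin d → ℝ) (hβv : ∀ i, 0 < βv i)
    (hmgf : ∀ i, ∀ l : ℝ, 0 ≤ l →
      ∫⁻ ω, ENNReal.ofReal (Real.exp (l * ξ i ω)) ∂P
        ≤ ENNReal.ofReal (Real.exp (φ (l * βv i))))
    (δ : Fin d → ℝ) (hδpos : ∀ i, 0 < δ i) (hδle : ∀ i, δ i ≤ βv i)
    (hlow : ∀ i, ∀ u : ℝ, 1 ≤ u → expNegNu φ (u / δ i) ≤ P {ω | ξ i ω > u})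
    (u : ℝ) (hu : 1 ≤ u) :
    (∑ i, expNegNu φ (u / δ i))
        - ∑ p ∈ Finset.univ.offDiag, expNegNu φ (2 * u / (βv p.1 + βv p.2))
      ≤ P {ω | ∃ i, ξ i ω > u} := by
  rw [tsub_le_iff_right]
  have hB := bonf_aux P (fun i => {ω | ξ i ω > u})
    (fun i => measurableSet_lt measurable_const (hmeas i)) Finset.univ
  have hU : (⋃ i ∈ (Finset.univ : Finset (Fin d)), {ω | ξ i ω > u}) = {ω | ∃ i, ξ i ω > u} := by
    ext ω; simp
  rw [hU] at hB
  refine (Finset.sum_le_sum fun i _ => hlow i u hu).trans (hB.trans ?_)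
  gcongr with p hp
  have h1 := hβv p.1
  have h2 := hβv p.2
  rcases le_total (βv p.1) (βv p.2) with h | h
  · refine (measure_mono Set.inter_subset_left).trans
      (tail_aux P _ (hmeas p.1) φ _ h1 (hmgf p.1) u _ ?_)
    rw [div_le_div_iff₀ (by positivity) h1]
    nlinarith
  · refine (measure_mono Set.inter_subset_right).trans
      (tail_aux P _ (hmeas p.2) φ _ h2 (hmgf p.2) u _ ?_)
    rw [div_le_div_iff₀ (by positivity) h2]
    nlinarith
end

section
/- Let (ξ_1, ξ_2) be a pair of real random variables on a probability space (Ω, ℱ, P), let σ_1, σ_2 > 0 and ρ with |ρ| < 1 satisfy ρ σ_1 ≤ σ_2 and ρ σ_2 ≤ σ_1, and assume that for all real λ_1, λ_2, E exp(λ_1 ξ_1 + λ_2 ξ_2) ≤ exp( (σ_1² λ_1² + 2 ρ σ_1 σ_2 λ_1 λ_2 + σ_2² λ_2²) / 2 ). Then for every u ≥ 1, P(min(ξ_1, ξ_2) > u) ≤ exp( − (u² / (2 (1 − ρ²))) · (σ_1² + σ_2² − 2 ρ σ_1 σ_2) / (σ_1² σ_2²) ). -/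
open MeasureTheory
open scoped ENNReal

/-- **Estimate (6.2)–(6.3): minimum tail of a bivariate subgaussian vector.**
If `(ξ 1, ξ 2)` is subgaussian with parameters `σ 1, σ 2 > 0` and subgaussian correlation
`ρ`, `|ρ| < 1`, with `ρ σ 1 ≤ σ 2` and `ρ σ 2 ≤ σ 1`, then for every `u ≥ 1`,
`P(min(ξ 1, ξ 2) > u) ≤ exp(−(u²/(2(1−ρ²))) (σ 1² + σ 2² − 2ρ σ 1 σ 2)/(σ 1² σ 2²))`. -/
theorem bivariate_subgaussian_min_tail
    {Ω : Type*} [MeasurableSpace Ω] (P : Measure Ω) [IsProbabilityMeasure P]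
    (ξ₁ ξ₂ : Ω → ℝ) (hξ₁ : Measurable ξ₁) (hξ₂ : Measurable ξ₂)
    (σ₁ σ₂ ρ : ℝ) (hσ₁ : 0 < σ₁) (hσ₂ : 0 < σ₂) (hρ : |ρ| < 1)
    (hρ₁ : ρ * σ₁ ≤ σ₂) (hρ₂ : ρ * σ₂ ≤ σ₁)
    (hmgf : ∀ l₁ l₂ : ℝ,
      ∫⁻ ω, ENNReal.ofReal (Real.exp (l₁ * ξ₁ ω + l₂ * ξ₂ ω)) ∂P
        ≤ ENNReal.ofReal (Real.exp
            ((σ₁ ^ 2 * l₁ ^ 2 + 2 * ρ * σ₁ * σ₂ * l₁ * l₂ + σ₂ ^ 2 * l₂ ^ 2) / 2)))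
    (u : ℝ) (hu : 1 ≤ u) :
    P {ω | min (ξ₁ ω) (ξ₂ ω) > u}
      ≤ ENNReal.ofReal (Real.exp (-(u ^ 2 / (2 * (1 - ρ ^ 2)))
          * ((σ₁ ^ 2 + σ₂ ^ 2 - 2 * ρ * σ₁ * σ₂) / (σ₁ ^ 2 * σ₂ ^ 2)))) := by
  have hD : 0 < 1 - ρ ^ 2 := by
    have := (sq_lt_one_iff_abs_lt_one ρ).2 hρ
    linarith
  obtain ⟨l₁, hl₁⟩ : ∃ l, l = u * (σ₂ - ρ * σ₁) / ((1 - ρ ^ 2) * σ₁ ^ 2 * σ₂) := ⟨_, rfl⟩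
  obtain ⟨l₂, hl₂⟩ : ∃ l, l = u * (σ₁ - ρ * σ₂) / ((1 - ρ ^ 2) * σ₁ * σ₂ ^ 2) := ⟨_, rfl⟩
  have h1 : 0 ≤ l₁ := by
    rw [hl₁]
    exact div_nonneg (mul_nonneg (by linarith) (by linarith)) (by positivity)
  have h2 : 0 ≤ l₂ := by
    rw [hl₂]
    exact div_nonneg (mul_nonneg (by linarith) (by linarith)) (by positivity)
  have hm : Measurable fun ω => ENNReal.ofReal (Real.exp (l₁ * ξ₁ ω + l₂ * ξ₂ ω)) := by
    fun_prop
  have key := mul_meas_ge_le_lintegral (μ := P)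
    (hm.const_mul (ENNReal.ofReal (Real.exp (-(l₁ * u + l₂ * u))))) 1
  rw [one_mul, lintegral_const_mul _ hm] at key
  have hsub : {ω | min (ξ₁ ω) (ξ₂ ω) > u} ⊆ {ω | 1 ≤
      ENNReal.ofReal (Real.exp (-(l₁ * u + l₂ * u))) *
        ENNReal.ofReal (Real.exp (l₁ * ξ₁ ω + l₂ * ξ₂ ω))} := by
    intro ω hω
    obtain ⟨ha, hb⟩ := lt_min_iff.1 (show u < min (ξ₁ ω) (ξ₂ ω) from hω)
    show (1 : ℝ≥0∞) ≤ _
    rw [← ENNReal.ofReal_mul (Real.exp_pos _).le, ← Real.exp_add, ENNReal.one_le_ofReal]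
    apply Real.one_le_exp
    have := mul_le_mul_of_nonneg_left ha.le h1
    have := mul_le_mul_of_nonneg_left hb.le h2
    linarith
  refine (measure_mono hsub).trans (key.trans ?_)
  refine (mul_le_mul_right (hmgf l₁ l₂) _).trans ?_
  rw [← ENNReal.ofReal_mul (Real.exp_pos _).le, ← Real.exp_add]
  apply le_of_eq
  congr 2
  rw [hl₁, hl₂]
  have := hD.ne'
  field_simp
  ring
end
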